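/- Let (G,*) be a right group, let J := { x⁻¹ : x ∈ G } be the set of inverses and E := { e ∈ G : e*x = x for all x ∈ G } the set of left neutral elements. Then the map J × E → G, (h,e) ↦ h*e, is a bijection, and for all h,k ∈ J and e,f ∈ E one has (h*e)*(k*f) = (h*k)*f; in particular G is isomorphic as a semigroup to the direct product of the group J and the right zero semigroup E. -/

import Mathlib

/-!
Since `x⁻¹⁻¹ = x * (x⁻¹ * x⁻¹⁻¹) = x * 1`, left multiplication by `x⁻¹ * x` agrees with left
multiplication by `x⁻¹ * x⁻¹⁻¹ = 1`, so each `x⁻¹ * x` is left neutral. It follows that `J` is the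
set of elements fixed by right multiplication by `1`, and `x = (x * 1) * (x⁻¹ * x)` is the unique
factorization of `x` into an element of `J` and a left neutral element.
-/

section LeftNeutrals

variable {S : Type*} [Semigroup S]

/-- The left neutral elements of a semigroup. In a right group this is the right zero factor `E`. -/
def leftNeutrals (S : Type*) [Semigroup S] : Subsemigroup S where
  carrier := {e | ∀ x, e * x = x}
  mul_mem' {e f} he hf x := by rw [mul_assoc, hf, he]

theorem mul_eq_right_of_mem_leftNeutrals {e : S} (he : e ∈ leftNeutrals S) (x : S) : e * x = x :=
  he x

theorem mul_mul_mul_of_mem_leftNeutrals {e : S} (he : e ∈ leftNeutrals S) (x y z : S) :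
    x * e * (y * z) = x * y * z := by
  rw [mul_assoc, mul_eq_right_of_mem_leftNeutrals he, mul_assoc]

end LeftNeutrals

/-- A right group: a semigroup with a left neutral element `1` and right inverses `x⁻¹`. The
element `1` is part of the data, since there may be several left neutral elements. -/
class RightGroup (G : Type*) extends Semigroup G, One G, Inv G where
  protected one_mul : ∀ x : G, 1 * x = x
  protected mul_inv_cancel : ∀ x : G, x * x⁻¹ = 1

namespace RightGroup

variable {G : Type*} [RightGroup G]

theorem inv_inv_eq_mul_one (x : G) : x⁻¹⁻¹ = x * 1 :=
  calc
    x⁻¹⁻¹ = x * x⁻¹ * x⁻¹⁻¹ := by rw [RightGroup.mul_inv_cancel, RightGroup.one_mul]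
    _ = x * 1 := by rw [mul_assoc, RightGroup.mul_inv_cancel]

protected theorem inv_mul_cancel_left (x y : G) : x⁻¹ * (x * y) = y :=
  calc
    x⁻¹ * (x * y) = x⁻¹ * (x * 1 * y) := by rw [mul_assoc x, RightGroup.one_mul]
    _ = x⁻¹ * x⁻¹⁻¹ * y := by rw [← inv_inv_eq_mul_one, mul_assoc]
    _ = y := by rw [RightGroup.mul_inv_cancel, RightGroup.one_mul]

theorem inv_mul_one (x : G) : x⁻¹ * 1 = x⁻¹ := by
  rw [← RightGroup.mul_inv_cancel x, RightGroup.inv_mul_cancel_left]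

theorem inv_mul_self_mem_leftNeutrals (x : G) : x⁻¹ * x ∈ leftNeutrals G := fun y ↦ by
  rw [mul_assoc, RightGroup.inv_mul_cancel_left]

/-- The inverses in a right group, which form its group factor `J`. -/
def inverses (G : Type*) [RightGroup G] : Subsemigroup G where
  carrier := {h | ∃ x : G, h = x⁻¹}
  mul_mem' := by
    rintro h _ _ ⟨y, rfl⟩
    exact ⟨(h * y⁻¹)⁻¹, by rw [inv_inv_eq_mul_one, mul_assoc, inv_mul_one]⟩

theorem mul_one_mem_inverses (x : G) : x * 1 ∈ inverses G :=
  ⟨x⁻¹, (inv_inv_eq_mul_one x).symm⟩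

theorem mem_inverses_iff_mul_one_eq {h : G} : h ∈ inverses G ↔ h * 1 = h where
  mp := by
    rintro ⟨x, rfl⟩
    exact inv_mul_one x
  mpr hh := hh ▸ mul_one_mem_inverses h

theorem inv_mul_self_of_mem_inverses {h : G} (hh : h ∈ inverses G) : h⁻¹ * h = 1 :=
  calc
    h⁻¹ * h = h⁻¹ * (h * 1) := by rw [mem_inverses_iff_mul_one_eq.1 hh]
    _ = 1 := RightGroup.inv_mul_cancel_left h 1

instance : Group (inverses G) where
  one := ⟨1, mem_inverses_iff_mul_one_eq.2 (RightGroup.one_mul 1)⟩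
  inv h := ⟨(h : G)⁻¹, h, rfl⟩
  one_mul h := Subtype.ext (RightGroup.one_mul (h : G))
  mul_one h := Subtype.ext (mem_inverses_iff_mul_one_eq.1 h.2)
  inv_mul_cancel h := Subtype.ext (inv_mul_self_of_mem_inverses h.2)

theorem mul_one_mul_inv_mul_self (x : G) : x * 1 * (x⁻¹ * x) = x := by
  rw [mul_assoc, RightGroup.one_mul, ← mul_assoc, RightGroup.mul_inv_cancel, RightGroup.one_mul]

theorem mul_leftNeutral_mul_one {h e : G} (hh : h ∈ inverses G) (he : e ∈ leftNeutrals G) :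
    h * e * 1 = h := by
  rw [mul_assoc, mul_eq_right_of_mem_leftNeutrals he, mem_inverses_iff_mul_one_eq.1 hh]

theorem inv_mul_self_mul_leftNeutral (x : G) {e : G} (he : e ∈ leftNeutrals G) :
    (x * e)⁻¹ * (x * e) = e :=
  calc
    (x * e)⁻¹ * (x * e) = (x * e)⁻¹ * (x * e * e) := by
      rw [mul_assoc x e e, mul_eq_right_of_mem_leftNeutrals he]
    _ = e := RightGroup.inv_mul_cancel_left (x * e) e

/-- The decomposition of a right group as the direct product of the group of its inverses and the
right zero semigroup of its left neutral elements. -/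
def inversesProdLeftNeutralsMulEquiv (G : Type*) [RightGroup G] :
    inverses G × leftNeutrals G ≃* G where
  toFun p := p.1 * p.2
  invFun x := (⟨x * 1, mul_one_mem_inverses x⟩, ⟨x⁻¹ * x, inv_mul_self_mem_leftNeutrals x⟩)
  left_inv p := Prod.ext (Subtype.ext (mul_leftNeutral_mul_one p.1.2 p.2.2))
    (Subtype.ext (inv_mul_self_mul_leftNeutral (p.1 : G) p.2.2))
  right_inv := mul_one_mul_inv_mul_self
  map_mul' p q := by
    change (p.1 * q.1 : G) * (p.2 * q.2) = p.1 * p.2 * (q.1 * q.2)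
    rw [mul_mul_mul_of_mem_leftNeutrals p.2.2, mul_eq_right_of_mem_leftNeutrals p.2.2]

end RightGroup

/-- Let `(G,*)` be a right group, `J := {x⁻¹ : x ∈ G}` the set of inverses and
`E := {e : e*x = x ∀ x}` the set of left neutral elements. Then `(h,e) ↦ h*e` is a bijection
`J × E → G`, and `(h*e)*(k*f) = (h*k)*f` for `h,k ∈ J`, `e,f ∈ E`; in particular `G` is
isomorphic as a semigroup to the direct product of the group `J` and the right zero
semigroup `E`. -/
theorem rightGroup_structure {G : Type*} (mul : G → G → G) (one : G) (inv : G → G)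
    (assoc : ∀ x y z : G, mul (mul x y) z = mul x (mul y z))
    (one_mul : ∀ x : G, mul one x = x)
    (mul_inv : ∀ x : G, mul x (inv x) = one) :
    Function.Bijective
      (fun p : {h : G // ∃ x : G, h = inv x} × {e : G // ∀ x : G, mul e x = x} =>
        mul p.1.val p.2.val) ∧
    (∀ h k e f : G, (∃ x, h = inv x) → (∃ x, k = inv x) →
      (∀ x, mul e x = x) → (∀ x, mul f x = x) →
      mul (mul h e) (mul k f) = mul (mul h k) f) ∧
    -- `J` is a group under `*`:
    (∃ x, one = inv x) ∧
    (∀ h k : G, (∃ x, h = inv x) → (∃ x, k = inv x) → ∃ x, mul h k = inv x) ∧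
    (∀ h : G, (∃ x, h = inv x) → mul one h = h ∧ mul h one = h) ∧
    (∀ h : G, (∃ x, h = inv x) → mul h (inv h) = one ∧ mul (inv h) h = one) ∧
    -- `E` is a right zero semigroup:
    (∀ e f : G, (∀ x, mul e x = x) → (∀ x, mul f x = x) → mul e f = f) := by
  let _ : RightGroup G :=
    { mul, one, inv, mul_assoc := assoc, one_mul, mul_inv_cancel := mul_inv }
  let toJ (h : G) (hh : ∃ x, h = inv x) : RightGroup.inverses G := ⟨h, hh⟩
  refine ⟨(RightGroup.inversesProdLeftNeutralsMulEquiv G).bijective, ?_, ?_, ?_, ?_, ?_, ?_⟩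
  · exact fun h k e f _ _ he _ ↦ mul_mul_mul_of_mem_leftNeutrals he h k f
  · exact (1 : RightGroup.inverses G).2
  · exact fun h k hh hk ↦ (toJ h hh * toJ k hk).2
  · exact fun h hh ↦ ⟨one_mul h, congrArg Subtype.val (mul_one (toJ h hh))⟩
  · exact fun h hh ↦ ⟨mul_inv h, congrArg Subtype.val (inv_mul_cancel (toJ h hh))⟩
  · exact fun e f he _ ↦ mul_eq_right_of_mem_leftNeutrals he f
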